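/- arXiv:0910.2252 — 2 statements merged into one kernel-verified Lean document; each statement's English description precedes it below -/
import Mathlib

section
/- The closed unit ball C = { f ∈ X : ‖f‖₁ ≤ 1 } of X = ℓ¹([0,1], ℂ) is not compact in the weak topology σ(X, C[0,1]) induced by the pairing with C([0,1], ℂ). -/
open Filter Topology

namespace UnitIntervalPairing

/-- The grid point `k / (n + 1)` of the unit interval. -/
noncomputable def gridPoint (n : ℕ) (k : Fin (n + 1)) : unitInterval :=
  ⟨(k : ℝ) / ((n : ℝ) + 1), by positivity, by
    have hk : (k : ℝ) < (n : ℝ) + 1 := by exact_mod_cast k.2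
    exact (div_le_one (by positivity)).2 hk.le⟩

/-- The uniform probability distribution on the grid `{k / (n + 1) | k ≤ n}`. -/
noncomputable def gridMean (n : ℕ) : lp (fun _ : unitInterval => ℂ) 1 :=
  ∑ k : Fin (n + 1), lp.single 1 (gridPoint n k) ((1 : ℂ) / ((n : ℂ) + 1))

lemma norm_gridMean_le (n : ℕ) : ‖gridMean n‖ ≤ 1 := by
  refine (norm_sum_le _ _).trans ?_
  have h : ‖(n : ℂ) + 1‖ = (n : ℝ) + 1 := by
    exact_mod_cast Complex.norm_natCast (n + 1)
  have hn : (n : ℝ) + 1 ≠ 0 := by positivity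
  simp only [lp.norm_single one_pos, norm_div, norm_one, h, Finset.sum_const, Finset.card_univ,
    Fintype.card_fin, nsmul_eq_mul]
  push_cast
  field_simp
  exact le_rfl

/-- The tent function of height one at `x`, supported in the ball of radius `1 / (m + 1)`. -/
noncomputable def tent (x : unitInterval) (m : ℕ) : C(unitInterval, ℂ) where
  toFun y := ((max 0 (1 - ((m : ℝ) + 1) * dist y x) : ℝ) : ℂ)
  continuous_toFun := by fun_prop

lemma norm_tent_le_one (x : unitInterval) (m : ℕ) (y : unitInterval) : ‖tent x m y‖ ≤ 1 := by
  have h : 0 ≤ ((m : ℝ) + 1) * dist y x := by positivity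
  simp only [tent, ContinuousMap.coe_mk, Complex.norm_real, Real.norm_eq_abs]
  rw [abs_of_nonneg (le_max_left _ _)]
  exact max_le zero_le_one (by linarith)

lemma tent_self (x : unitInterval) (m : ℕ) : tent x m x = 1 := by
  simp [tent]

lemma tent_eq_zero {x y : unitInterval} {m : ℕ} (h : 1 ≤ ((m : ℝ) + 1) * dist y x) :
    tent x m y = 0 := by
  simp only [tent, ContinuousMap.coe_mk]
  rw [max_eq_left (by linarith)]
  simp

lemma tendsto_tent (x y : unitInterval) :
    Tendsto (fun m => tent x m y) atTop (𝓝 (if y = x then 1 else 0)) := by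
  split_ifs with h
  · subst h
    simp [tent_self]
  · refine tendsto_const_nhds.congr' ?_
    have hd : 0 < dist y x := dist_pos.2 h
    obtain ⟨N, hN⟩ := exists_nat_ge (1 / dist y x)
    filter_upwards [eventually_ge_atTop N] with m hm
    refine (tent_eq_zero ?_).symm
    rw [div_le_iff₀ hd] at hN
    have : (N : ℝ) ≤ m := by exact_mod_cast hm
    nlinarith

lemma card_grid_le (n : ℕ) (x : unitInterval) {r : ℝ} (hr : 0 ≤ r) :
    (((Finset.univ.filter fun k : Fin (n + 1) => dist (gridPoint n k) x < r).card : ℕ) : ℝ) ≤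
      2 * r * ((n : ℝ) + 1) + 1 := by
  have hn : (0 : ℝ) < (n : ℝ) + 1 := by positivity
  set a : ℝ := ((x : ℝ) - r) * ((n : ℝ) + 1)
  set b : ℝ := ((x : ℝ) + r) * ((n : ℝ) + 1)
  have hab : b - a = 2 * r * ((n : ℝ) + 1) := by simp only [a, b]; ring
  have hcard : (Finset.univ.filter fun k : Fin (n + 1) => dist (gridPoint n k) x < r).card ≤
      (Finset.Icc ⌈a⌉ ⌊b⌋).card := by
    refine Finset.card_le_card_of_injOn (fun k => ((k : ℕ) : ℤ)) ?_ ?_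
    · intro k hk
      have hk' : dist (gridPoint n k) x < r := by simpa using hk
      rw [Subtype.dist_eq, Real.dist_eq, abs_lt] at hk'
      simp only [gridPoint] at hk'
      have h1 : (x : ℝ) - r ≤ (k : ℝ) / ((n : ℝ) + 1) := by linarith
      have h2 : (k : ℝ) / ((n : ℝ) + 1) ≤ (x : ℝ) + r := by linarith
      rw [le_div_iff₀ hn] at h1
      rw [div_le_iff₀ hn] at h2
      simp only [Finset.coe_Icc, Set.mem_Icc, Int.ceil_le, Int.le_floor]
      rw [Int.cast_natCast]
      exact ⟨h1, h2⟩
    · intro k _ l _ h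
      exact Fin.ext (Int.ofNat_inj.1 h)
  have hfloor : (((Finset.Icc ⌈a⌉ ⌊b⌋).card : ℕ) : ℝ) ≤ b - a + 1 := by
    rw [Int.card_Icc]
    have hpos : 0 ≤ b - a := by rw [hab]; positivity
    rcases le_total 0 (⌊b⌋ + 1 - ⌈a⌉) with h | h
    · have : (((⌊b⌋ + 1 - ⌈a⌉).toNat : ℕ) : ℝ) = ((⌊b⌋ + 1 - ⌈a⌉ : ℤ) : ℝ) := by
        exact_mod_cast Int.toNat_of_nonneg h
      rw [this]
      push_cast
      linarith [Int.floor_le b, Int.le_ceil a]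
    · rw [Int.toNat_of_nonpos h]
      push_cast
      linarith
  rw [← hab]
  exact (Nat.cast_le.2 hcard).trans hfloor

section Pairing

variable {B : lp (fun _ : unitInterval => ℂ) 1 →ₗ[ℂ] C(unitInterval, ℂ) →ₗ[ℂ] ℂ}

lemma pairing_gridMean
    (hB : ∀ (f : lp (fun _ : unitInterval => ℂ) 1) (g : C(unitInterval, ℂ)),
      B f g = ∑' x : unitInterval, g x * f x) (n : ℕ) (g : C(unitInterval, ℂ)) :
    B (gridMean n) g = (∑ k : Fin (n + 1), g (gridPoint n k)) / ((n : ℂ) + 1) := by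
  rw [gridMean, map_sum, LinearMap.sum_apply, Finset.sum_div]
  refine Finset.sum_congr rfl fun k _ => ?_
  rw [hB, tsum_eq_single (gridPoint n k)]
  · rw [lp.single_apply_self, mul_one_div]
  · intro y hy
    rw [lp.single_apply_ne _ _ _ hy, mul_zero]

lemma pairing_gridMean_one
    (hB : ∀ (f : lp (fun _ : unitInterval => ℂ) 1) (g : C(unitInterval, ℂ)),
      B f g = ∑' x : unitInterval, g x * f x) (n : ℕ) : B (gridMean n) 1 = 1 := by
  have : (n : ℂ) + 1 ≠ 0 := by exact_mod_cast n.succ_ne_zero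
  rw [pairing_gridMean hB]
  simp [this]

lemma norm_pairing_gridMean_tent_le
    (hB : ∀ (f : lp (fun _ : unitInterval => ℂ) 1) (g : C(unitInterval, ℂ)),
      B f g = ∑' x : unitInterval, g x * f x) (x : unitInterval) {m n : ℕ} (hmn : m ≤ n) :
    ‖B (gridMean n) (tent x m)‖ ≤ 3 * (1 / ((m : ℝ) + 1)) := by
  have hm : (0 : ℝ) < (m : ℝ) + 1 := by positivity
  have hn : (0 : ℝ) < (n : ℝ) + 1 := by positivity
  have hmn' : (m : ℝ) ≤ n := by exact_mod_cast hmn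
  have h : ‖(n : ℂ) + 1‖ = (n : ℝ) + 1 := by
    exact_mod_cast Complex.norm_natCast (n + 1)
  rw [pairing_gridMean hB, norm_div, h, div_le_iff₀ hn]
  calc ‖∑ k : Fin (n + 1), tent x m (gridPoint n k)‖
      ≤ ∑ k : Fin (n + 1), if dist (gridPoint n k) x < 1 / ((m : ℝ) + 1) then (1 : ℝ) else 0 := by
        refine norm_sum_le_of_le _ fun k _ => ?_
        split_ifs with hk
        · exact norm_tent_le_one _ _ _
        · rw [not_lt, div_le_iff₀' hm] at hk
          rw [tent_eq_zero hk, norm_zero]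
    _ ≤ 2 * (1 / ((m : ℝ) + 1)) * ((n : ℝ) + 1) + 1 := by
        rw [Finset.sum_boole]
        exact card_grid_le n x (by positivity)
    _ ≤ 3 * (1 / ((m : ℝ) + 1)) * ((n : ℝ) + 1) := by
        have : 1 ≤ 1 / ((m : ℝ) + 1) * ((n : ℝ) + 1) := by
          rw [one_div_mul_eq_div, le_div_iff₀ hm]
          linarith
        linarith

lemma tendsto_pairing_tent
    (hB : ∀ (f : lp (fun _ : unitInterval => ℂ) 1) (g : C(unitInterval, ℂ)),
      B f g = ∑' x : unitInterval, g x * f x) (f : lp (fun _ : unitInterval => ℂ) 1)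
    (x : unitInterval) : Tendsto (fun m => B f (tent x m)) atTop (𝓝 (f x)) := by
  have hsum : Summable fun y => ‖f y‖ := by
    simpa using (lp.memℓp f).summable (by simp)
  have key : Tendsto (fun m => ∑' y, tent x m y * f y) atTop
      (𝓝 (∑' y, (if y = x then 1 else 0) * f y)) := by
    refine tendsto_tsum_of_dominated_convergence hsum
      (fun y => (tendsto_tent x y).mul_const _) (Eventually.of_forall fun m y => ?_)
    rw [norm_mul]
    exact mul_le_of_le_one_left (norm_nonneg _) (norm_tent_le_one _ _ _)
  simpa [hB] using key

end Pairing

end UnitIntervalPairing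

open UnitIntervalPairing

/-- The closed unit ball of `X = ℓ¹([0,1], ℂ)` is not compact in the weak topology
`σ(X, C[0,1])` induced by the pairing `B(f)(g) = ∑_x g(x) f(x)` with `C([0,1], ℂ)`. -/
theorem unit_ball_not_weakly_compact_l1_pairing_continuous
    (B : lp (fun _ : unitInterval => ℂ) 1 →ₗ[ℂ] C(unitInterval, ℂ) →ₗ[ℂ] ℂ)
    (hB : ∀ (f : lp (fun _ : unitInterval => ℂ) 1) (g : C(unitInterval, ℂ)),
      B f g = ∑' x : unitInterval, g x * f x) :
    ¬ IsCompact (show Set (WeakBilin B) from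
      { f : lp (fun _ : unitInterval => ℂ) 1 | ‖f‖ ≤ 1 }) := by
  intro hK
  let u : ℕ → WeakBilin B := gridMean
  obtain ⟨f, -, hf⟩ := hK.ultrafilter_le_nhds ((Ultrafilter.of atTop).map u)
    (le_principal_iff.2 (mem_map.2 (Eventually.of_forall norm_gridMean_le)))
  have hlim (g : C(unitInterval, ℂ)) :
      Tendsto (fun n => B (gridMean n) g) (Ultrafilter.of (atTop : Filter ℕ)) (𝓝 (B f g)) :=
    ((WeakBilin.eval_continuous B g).tendsto f).comp (show Tendsto u _ (𝓝 f) from hf)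
  have hone : B f 1 = 1 := by
    refine tendsto_nhds_unique (hlim 1) ?_
    simp only [pairing_gridMean_one hB]
    exact tendsto_const_nhds
  have htent (x : unitInterval) (m : ℕ) : ‖B f (tent x m)‖ ≤ 3 * (1 / ((m : ℝ) + 1)) :=
    le_of_tendsto (hlim _).norm (Ultrafilter.of_le atTop
      ((eventually_ge_atTop m).mono fun n hn => norm_pairing_gridMean_tent_le hB x hn))
  let f' : lp (fun _ : unitInterval => ℂ) 1 := f
  have hzero (x : unitInterval) : f' x = 0 := by
    refine tendsto_nhds_unique (tendsto_pairing_tent hB f' x) ?_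
    refine squeeze_zero_norm (htent x) ?_
    simpa using (tendsto_one_div_add_atTop_nhds_zero_nat (𝕜 := ℝ)).const_mul 3
  refine one_ne_zero (α := ℂ) ?_
  refine hone.symm.trans ((hB f' 1).trans ?_)
  exact (tsum_congr fun x => by rw [hzero x, mul_zero]).trans tsum_zero
end

section
/- Let C = { f ∈ X : ‖f‖₁ ≤ 1 } be the closed unit ball of X = ℓ¹([0,1], ℂ). Then: (i) C is convex, circled, and closed in the weak topology σ(X, C[0,1]); (ii) for every g ∈ C([0,1], ℂ) there exists f₀ ∈ C with |∑_{x ∈ [0,1]} f₀(x) g(x)| = sup_{f ∈ C} |∑_{x ∈ [0,1]} f(x) g(x)|; and yet (iii) C is not compact in σ(X, C[0,1]). -/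
open Filter Topology

namespace LpOne

section General

variable {ι : Type*}

theorem norm_eq_tsum (f : lp (fun _ : ι => ℂ) 1) : ‖f‖ = ∑' x, ‖f x‖ := by
  have h := lp.norm_eq_tsum_rpow (p := 1) (by simp) f
  simpa using h

theorem summable_norm (f : lp (fun _ : ι => ℂ) 1) : Summable fun x => ‖f x‖ := by
  have h := (lp.memℓp f).summable (by simp)
  simpa using h

theorem norm_mul_le (f : lp (fun _ : ι => ℂ) 1) {g : ι → ℂ} {c : ℝ} (hg : ∀ x, ‖g x‖ ≤ c)
    (x : ι) : ‖f x * g x‖ ≤ ‖f x‖ * c := by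
  rw [norm_mul]
  exact mul_le_mul_of_nonneg_left (hg x) (norm_nonneg _)

theorem summable_mul (f : lp (fun _ : ι => ℂ) 1) {g : ι → ℂ} {c : ℝ} (hg : ∀ x, ‖g x‖ ≤ c) :
    Summable fun x => f x * g x :=
  .of_norm_bounded ((summable_norm f).mul_right c) (norm_mul_le f hg)

theorem norm_tsum_mul_le (f : lp (fun _ : ι => ℂ) 1) {g : ι → ℂ} {c : ℝ}
    (hg : ∀ x, ‖g x‖ ≤ c) : ‖∑' x, f x * g x‖ ≤ ‖f‖ * c := by
  rw [norm_eq_tsum f, ← tsum_mul_right]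
  exact tsum_of_norm_bounded ((summable_norm f).mul_right c).hasSum (norm_mul_le f hg)

theorem tsum_single_mul [DecidableEq ι] (x : ι) (a : ℂ) (g : ι → ℂ) :
    ∑' y, (lp.single 1 x a : lp (fun _ : ι => ℂ) 1) y * g y = a * g x := by
  rw [tsum_eq_single x]
  · simp
  · intro y hy
    simp [hy]

theorem norm_le_of_forall_finset [TopologicalSpace ι] [CompactSpace ι] [T2Space ι]
    (f : lp (fun _ : ι => ℂ) 1) {c : ℝ}
    (h : ∀ g : C(ι, ℂ), (∀ x, ‖g x‖ ≤ 1) → ‖∑' x, f x * g x‖ ≤ c) : ‖f‖ ≤ c := by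
  classical
  refine le_of_forall_pos_le_add fun ε hε => ?_
  have hs := summable_norm f
  have hlim : Tendsto (fun s : Finset ι => ∑ x ∈ s, ‖f x‖) atTop (𝓝 ‖f‖) := by
    rw [norm_eq_tsum]; exact hs.hasSum
  obtain ⟨s, hsε⟩ := (hlim.eventually (lt_mem_nhds (by linarith : ‖f‖ - ε / 2 < ‖f‖))).exists
  have : DiscreteTopology (s : Set ι) := s.finite_toSet.instDiscreteTopology
  let φ : C((s : Set ι), Metric.closedBall (0 : ℂ) 1) :=
    ⟨fun x => ⟨(starRingEnd ℂ (f x)) / ‖f x‖, by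
      rw [mem_closedBall_zero_iff]
      simpa using div_self_le_one ‖f x‖⟩, continuous_of_discreteTopology⟩
  obtain ⟨g, hg⟩ := φ.exists_restrict_eq s.finite_toSet.isClosed
  let g' : C(ι, ℂ) := ⟨fun x => (g x : ℂ), by fun_prop⟩
  have hg' : ∀ x, ‖g' x‖ ≤ 1 := fun x => mem_closedBall_zero_iff.1 (g x).2
  have hval : ∀ x ∈ s, f x * g' x = (‖f x‖ : ℂ) := by
    intro x hx
    have : g' x = (starRingEnd ℂ (f x)) / ‖f x‖ :=
      congrArg Subtype.val (DFunLike.congr_fun hg ⟨x, hx⟩)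
    rw [this]
    rcases eq_or_ne (f x) 0 with h0 | h0
    · simp [h0]
    · have : (‖f x‖ : ℂ) ≠ 0 := by simpa using h0
      rw [← mul_div_assoc, Complex.mul_conj, Complex.normSq_eq_norm_sq]
      field_simp
      norm_cast
  have hsum := (summable_mul f hg').sum_add_tsum_compl (s := s)
  have hnsum := hs.sum_add_tsum_compl (s := s)
  rw [← norm_eq_tsum] at hnsum
  have htail : ‖∑' x : ((s : Set ι)ᶜ : Set ι), f x * g' x‖ ≤
      ∑' x : ((s : Set ι)ᶜ : Set ι), ‖f x‖ :=
    tsum_of_norm_bounded (hs.subtype _).hasSum fun x => by simpa using norm_mul_le f hg' x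
  have hmain : ‖∑ x ∈ s, f x * g' x‖ = ∑ x ∈ s, ‖f x‖ := by
    rw [Finset.sum_congr rfl hval, ← Complex.ofReal_sum, Complex.norm_real,
      Real.norm_of_nonneg (Finset.sum_nonneg fun _ _ => norm_nonneg _)]
  have htri : ‖∑ x ∈ s, f x * g' x‖ ≤ ‖∑' x, f x * g' x‖ +
      ‖∑' x : ((s : Set ι)ᶜ : Set ι), f x * g' x‖ := by
    rw [eq_sub_of_add_eq hsum]; exact norm_sub_le _ _
  linarith [h g' hg']

end General

/-- The tent function of height `1` and half-width `1 / (m + 1)` centred at `x`. -/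
noncomputable def tent (x : unitInterval) (m : ℕ) : C(unitInterval, ℂ) :=
  ⟨fun y => ((max 0 (1 - (m + 1) * |(y : ℝ) - x|) : ℝ) : ℂ), by fun_prop⟩

theorem norm_tent (x : unitInterval) (m : ℕ) (y : unitInterval) :
    ‖tent x m y‖ = max 0 (1 - (m + 1) * |(y : ℝ) - x|) := by
  change ‖((max 0 (1 - (m + 1) * |(y : ℝ) - x|) : ℝ) : ℂ)‖ = _
  rw [Complex.norm_real, Real.norm_of_nonneg (le_max_left _ _)]

theorem norm_tent_le_one (x : unitInterval) (m : ℕ) (y : unitInterval) : ‖tent x m y‖ ≤ 1 := by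
  rw [norm_tent]
  refine max_le zero_le_one ?_
  have : 0 ≤ ((m : ℝ) + 1) * |(y : ℝ) - x| := by positivity
  linarith

theorem tent_self (x : unitInterval) (m : ℕ) : tent x m x = 1 := by
  simp [tent]

theorem tent_eq_zero {x y : unitInterval} {m : ℕ} (h : 1 ≤ (m + 1) * |(y : ℝ) - x|) :
    tent x m y = 0 := by
  rw [← norm_eq_zero, norm_tent]
  exact max_eq_left (by linarith)

theorem tendsto_tsum_mul_tent (f : lp (fun _ : unitInterval => ℂ) 1) (x : unitInterval) :
    Tendsto (fun m => ∑' y, f y * tent x m y) atTop (𝓝 (f x)) := by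
  classical
  have hfx : f x = ∑' y, if y = x then f x else 0 := by simp
  rw [hfx]
  refine tendsto_tsum_of_dominated_convergence (summable_norm f) (fun y => ?_)
    (.of_forall fun m y => by simpa using norm_mul_le f (norm_tent_le_one x m) y)
  rcases eq_or_ne y x with rfl | hy
  · simp [tent_self]
  · rw [if_neg hy]
    have hpos : 0 < |(y : ℝ) - x| := abs_pos.2 (sub_ne_zero.2 fun h => hy (Subtype.ext h))
    have hev : ∀ᶠ m : ℕ in atTop, 1 ≤ ((m : ℝ) + 1) * |(y : ℝ) - x| := by
      have : Tendsto (fun m : ℕ => ((m : ℝ) + 1) * |(y : ℝ) - x|) atTop atTop :=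
        (tendsto_atTop_add_const_right _ _ tendsto_natCast_atTop_atTop).atTop_mul_const hpos
      exact this.eventually_ge_atTop 1
    refine tendsto_const_nhds.congr' ?_
    filter_upwards [hev] with m hm
    rw [tent_eq_zero hm, mul_zero]

/-- The uniform probability on the points `k / n`, `k < n`. -/
noncomputable def average (n : ℕ) : lp (fun _ : unitInterval => ℂ) 1 :=
  open Classical in
  (n : ℂ)⁻¹ • ∑ k ∈ Finset.range n,
    lp.single 1 (Set.projIcc (0 : ℝ) 1 zero_le_one (k / n)) (1 : ℂ)

theorem norm_average_le_one (n : ℕ) : ‖average n‖ ≤ 1 := by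
  classical
  rw [average, norm_smul, norm_inv, Complex.norm_natCast]
  have h : ‖∑ k ∈ Finset.range n, (lp.single 1 (Set.projIcc (0 : ℝ) 1 zero_le_one (k / n))
      (1 : ℂ) : lp (fun _ : unitInterval => ℂ) 1)‖ ≤ n := by
    refine (norm_sum_le _ _).trans ?_
    simp [lp.norm_single]
  calc (n : ℝ)⁻¹ * _ ≤ (n : ℝ)⁻¹ * n := mul_le_mul_of_nonneg_left h (by positivity)
    _ ≤ 1 := inv_mul_le_one

theorem card_filter_abs_sub_lt_le (n : ℕ) (x r : ℝ) (hr : 0 ≤ r) (hx : 0 ≤ x) :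
    (((Finset.range n).filter fun k : ℕ => |(k : ℝ) - x| < r).card : ℝ) ≤ 2 * r + 1 := by
  have hsub : ((Finset.range n).filter fun k : ℕ => |(k : ℝ) - x| < r) ⊆
      Finset.Icc ⌈x - r⌉₊ ⌊x + r⌋₊ := by
    intro k hk
    obtain ⟨h1, h2⟩ := abs_lt.1 (Finset.mem_filter.1 hk).2
    rw [Finset.mem_Icc]
    exact ⟨Nat.ceil_le.2 (by linarith), Nat.le_floor (by linarith)⟩
  have hle := Finset.card_le_card hsub
  rw [Nat.card_Icc] at hle
  have h1 := Nat.le_ceil (x - r)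
  have h2 := Nat.floor_le (by linarith : 0 ≤ x + r)
  rcases le_total ⌈x - r⌉₊ (⌊x + r⌋₊ + 1) with h | h
  · have : (((Finset.range n).filter fun k : ℕ => |(k : ℝ) - x| < r).card : ℝ) + ⌈x - r⌉₊ ≤
        ⌊x + r⌋₊ + 1 := by exact_mod_cast (by omega)
    linarith
  · rw [Nat.sub_eq_zero_of_le h, Nat.le_zero] at hle
    rw [hle]
    push_cast
    linarith

theorem norm_sum_tent_le (x : unitInterval) (m : ℕ) {n : ℕ} (hn : 0 < n) :
    ‖(n : ℂ)⁻¹ * ∑ k ∈ Finset.range n, tent x m (Set.projIcc (0 : ℝ) 1 zero_le_one (k / n))‖ ≤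
      2 / (m + 1) + 1 / n := by
  have hn' : (0 : ℝ) < n := by exact_mod_cast hn
  have hsum : ‖∑ k ∈ Finset.range n, tent x m (Set.projIcc (0 : ℝ) 1 zero_le_one (k / n))‖ ≤
      2 * (n / (m + 1)) + 1 := by
    refine (norm_sum_le _ _).trans (le_trans ?_
      (card_filter_abs_sub_lt_le n (n * x) (n / (m + 1)) (by positivity)
        (mul_nonneg hn'.le x.2.1)))
    rw [Finset.card_filter, Nat.cast_sum]
    refine Finset.sum_le_sum fun k hk => ?_
    split_ifs with hkx
    · simpa using norm_tent_le_one x m _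
    · have hk1 : (k : ℝ) ≤ n := by exact_mod_cast (Finset.mem_range.1 hk).le
      rw [Set.projIcc_of_mem zero_le_one
        (show (k / n : ℝ) ∈ Set.Icc 0 1 from ⟨by positivity, div_le_one_of_le₀ hk1 hn'.le⟩),
        tent_eq_zero, norm_zero, Nat.cast_zero]
      have h : (k : ℝ) - n * x = n * (k / n - x) := by field_simp
      rw [not_lt, h, abs_mul, abs_of_pos hn', div_le_iff₀ (by positivity), mul_assoc] at hkx
      have := le_of_mul_le_mul_left ((mul_one (n : ℝ)).le.trans hkx) hn'
      rwa [mul_comm] at this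
  rw [norm_mul, norm_inv, Complex.norm_natCast]
  calc (n : ℝ)⁻¹ * _ ≤ (n : ℝ)⁻¹ * (2 * (n / (m + 1)) + 1) :=
        mul_le_mul_of_nonneg_left hsum (by positivity)
    _ = _ := by field_simp

section Pairing

variable (B : lp (fun _ : unitInterval => ℂ) 1 →ₗ[ℂ] C(unitInterval, ℂ) →ₗ[ℂ] ℂ)
  (hB : ∀ f g, B f g = ∑' x : unitInterval, g x * f x)

include hB

theorem pairing_apply (f : lp (fun _ : unitInterval => ℂ) 1) (g : C(unitInterval, ℂ)) :
    B f g = ∑' x, f x * g x := by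
  simp only [hB, mul_comm]

theorem pairing_average (n : ℕ) (g : C(unitInterval, ℂ)) :
    B (average n) g =
      (n : ℂ)⁻¹ * ∑ k ∈ Finset.range n, g (Set.projIcc (0 : ℝ) 1 zero_le_one (k / n)) := by
  classical
  simp only [average, map_smul, map_sum, LinearMap.smul_apply, LinearMap.sum_apply, smul_eq_mul]
  congr 1
  refine Finset.sum_congr rfl fun k _ => ?_
  rw [pairing_apply B hB, tsum_single_mul, one_mul]

theorem isClosed_unitBall : IsClosed (X := WeakBilin B)
    { f : lp (fun _ : unitInterval => ℂ) 1 | ‖f‖ ≤ 1 } := by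
  have h : { f : lp (fun _ : unitInterval => ℂ) 1 | ‖f‖ ≤ 1 } =
      ⋂ (g : C(unitInterval, ℂ)) (_ : ∀ x, ‖g x‖ ≤ 1), { f | ‖B f g‖ ≤ 1 } := by
    ext f
    simp only [Set.mem_ofPred_eq, Set.mem_iInter, pairing_apply B hB]
    refine ⟨fun hf g hg => ?_, norm_le_of_forall_finset f⟩
    simpa using (norm_tsum_mul_le f hg).trans (mul_le_mul_of_nonneg_right hf zero_le_one)
  exact (congrArg (IsClosed (X := WeakBilin B)) h).mpr <|
    isClosed_iInter fun g => isClosed_iInter fun _ =>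
      isClosed_le (WeakBilin.eval_continuous B g).norm continuous_const

theorem not_isCompact_unitBall : ¬ IsCompact (X := WeakBilin B)
    { f : lp (fun _ : unitInterval => ℂ) 1 | ‖f‖ ≤ 1 } := by
  intro hC
  obtain ⟨f, key⟩ : ∃ f : lp (fun _ : unitInterval => ℂ) 1,
      ∀ (g : C(unitInterval, ℂ)) (S : Set ℂ), IsClosed S →
        (∀ᶠ n in atTop, B (average n) g ∈ S) → B f g ∈ S := by
    let a : ℕ → WeakBilin B := average
    have ha : ∀ᶠ n in atTop, a n ∈ { f : lp (fun _ : unitInterval => ℂ) 1 | ‖f‖ ≤ 1 } :=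
      .of_forall norm_average_le_one
    have hne : (map a atTop).NeBot := inferInstance
    obtain ⟨f, -, hf⟩ := @hC (map a atTop) hne (le_principal_iff.2 ha)
    refine ⟨f, fun g S hS hev => ?_⟩
    have hcl : IsClosed (X := WeakBilin B) { h | B h g ∈ S } :=
      hS.preimage (WeakBilin.eval_continuous B g)
    exact isClosed_iff_clusterPt.1 hcl f (hf.mono (le_principal_iff.2 hev))
  have hone : B f 1 = 1 := by
    refine key 1 {1} isClosed_singleton ?_
    filter_upwards [eventually_gt_atTop 0] with n hn
    have : (n : ℂ) ≠ 0 := by exact_mod_cast hn.ne'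
    simp [pairing_average B hB, this]
  have htent : ∀ x m, ‖B f (tent x m)‖ ≤ 3 / ((m : ℝ) + 1) := by
    intro x m
    have := key (tent x m) (Metric.closedBall 0 (3 / ((m : ℝ) + 1))) Metric.isClosed_closedBall ?_
    · simpa using this
    filter_upwards [eventually_gt_atTop m] with n hn
    rw [mem_closedBall_zero_iff, pairing_average B hB]
    refine (norm_sum_tent_le x m (by omega)).trans ?_
    have hmn : (m : ℝ) + 1 ≤ n := by exact_mod_cast hn
    have := one_div_le_one_div_of_le (by positivity) hmn
    have h3 : 3 / ((m : ℝ) + 1) = 2 / (m + 1) + 1 / (m + 1) := by ring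
    linarith
  have hzero : ∀ x, f x = 0 := by
    intro x
    refine tendsto_nhds_unique (tendsto_tsum_mul_tent f x)
      (squeeze_zero_norm (fun m => ?_) (tendsto_const_div_atTop_nhds_zero_nat 3 |>.comp
        (tendsto_add_atTop_nat 1)))
    simpa [pairing_apply B hB] using htent x m
  rw [pairing_apply B hB] at hone
  simp [hzero] at hone

end Pairing

theorem exists_norm_tsum_eq_iSup (g : C(unitInterval, ℂ)) :
    ∃ f₀ ∈ { f : lp (fun _ : unitInterval => ℂ) 1 | ‖f‖ ≤ 1 },
      ‖∑' x : unitInterval, f₀ x * g x‖ =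
        ⨆ f ∈ { f : lp (fun _ : unitInterval => ℂ) 1 | ‖f‖ ≤ 1 },
          ‖∑' x : unitInterval, f x * g x‖ := by
  classical
  obtain ⟨x, -, hx⟩ := isCompact_univ.exists_isMaxOn Set.univ_nonempty
    (g.continuous.norm.continuousOn)
  have hg : ∀ y, ‖g y‖ ≤ ‖g x‖ := fun y => hx (Set.mem_univ y)
  have hmem : ‖(lp.single 1 x 1 : lp (fun _ : unitInterval => ℂ) 1)‖ ≤ 1 := by
    simp [lp.norm_single]
  have hle : ∀ f : lp (fun _ : unitInterval => ℂ) 1,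
      (⨆ _ : f ∈ { f : lp (fun _ : unitInterval => ℂ) 1 | ‖f‖ ≤ 1 },
        ‖∑' x : unitInterval, f x * g x‖) ≤ ‖g x‖ := fun f =>
    Real.iSup_le (fun hf => (norm_tsum_mul_le f hg).trans
      (mul_le_of_le_one_left (norm_nonneg _) hf)) (norm_nonneg _)
  refine ⟨lp.single 1 x 1, hmem, ?_⟩
  rw [tsum_single_mul, one_mul]
  refine le_antisymm ?_ (Real.iSup_le hle (norm_nonneg _))
  refine le_ciSup_of_le ⟨‖g x‖, Set.forall_mem_range.2 hle⟩ (lp.single 1 x 1) ?_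
  rw [ciSup_pos (show _ ∈ { f : lp (fun _ : unitInterval => ℂ) 1 | ‖f‖ ≤ 1 } from hmem), tsum_single_mul, one_mul]

end LpOne

/-- The paper's counterexample, combined: the closed unit ball `C` of
`X = ℓ¹([0,1], ℂ)` is (i) convex, circled and closed in the weak topology
`σ(X, C[0,1])` of the pairing `B(f)(g) = ∑_x g(x) f(x)` with `C([0,1], ℂ)`;
(ii) every such pairing functional attains (in modulus) its supremum on `C`;
and yet (iii) `C` is not compact in `σ(X, C[0,1])`. -/
theorem counterexample_sup_theorem_locally_convex
    (B : lp (fun _ : unitInterval => ℂ) 1 →ₗ[ℂ] C(unitInterval, ℂ) →ₗ[ℂ] ℂ)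
    (hB : ∀ (f : lp (fun _ : unitInterval => ℂ) 1) (g : C(unitInterval, ℂ)),
      B f g = ∑' x : unitInterval, g x * f x) :
    Convex ℝ { f : lp (fun _ : unitInterval => ℂ) 1 | ‖f‖ ≤ 1 } ∧
    (∀ f ∈ { f : lp (fun _ : unitInterval => ℂ) 1 | ‖f‖ ≤ 1 },
      ∀ α : ℂ, ‖α‖ ≤ 1 →
        α • f ∈ { f : lp (fun _ : unitInterval => ℂ) 1 | ‖f‖ ≤ 1 }) ∧
    IsClosed (show Set (WeakBilin B) from
      { f : lp (fun _ : unitInterval => ℂ) 1 | ‖f‖ ≤ 1 }) ∧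
    (∀ g : C(unitInterval, ℂ),
      ∃ f₀ ∈ { f : lp (fun _ : unitInterval => ℂ) 1 | ‖f‖ ≤ 1 },
        ‖∑' x : unitInterval, f₀ x * g x‖ =
          ⨆ f ∈ { f : lp (fun _ : unitInterval => ℂ) 1 | ‖f‖ ≤ 1 },
            ‖∑' x : unitInterval, f x * g x‖) ∧
    ¬ IsCompact (show Set (WeakBilin B) from
      { f : lp (fun _ : unitInterval => ℂ) 1 | ‖f‖ ≤ 1 }) := by
  refine ⟨?_, ?_, LpOne.isClosed_unitBall B hB, LpOne.exists_norm_tsum_eq_iSup,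
    LpOne.not_isCompact_unitBall B hB⟩
  · have h : { f : lp (fun _ : unitInterval => ℂ) 1 | ‖f‖ ≤ 1 } = Metric.closedBall 0 1 := by
      ext f
      simp
    rw [h]
    exact convex_closedBall 0 1
  · intro f hf α hα
    change ‖α • f‖ ≤ 1
    rw [norm_smul]
    exact mul_le_one₀ hα (norm_nonneg f) hf
end
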